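/- Let 0 < a < b ≤ 1, 0 < s < 1, and q ≥ 1, and set c = s² − s + 1, M₁ = ((√(ab))^s)/s + 1, M₂ = b^s/s + 1. Then |G(a^s/s + 1, b^s/s + 1)² − (2/s²)·A(G(a^s, b^s)², s²) − (2/s)·L_{s−1}(a,b)^{s−1}·L(a,b)| ≤ (1/G(a,b)^{(s−1)²})·(1/(c·q))^{1/q}·((b−a)/(4·L(a,b)))^{1−1/q} · [ M₁·G(a^{−(s−1)²}, b^s)·( b^{cq/2} − L(a^{cq/2}, b^{cq/2}) )^{1/q} + M₂·G(b^{−(s−1)²}, a^s)·( L(a^{cq/2}, b^{cq/2}) − a^{cq/2} )^{1/q} ]. -/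

import Mathlib

/-!
Put `a = exp α`, `b = exp β`, `w = β - α > 0`, `g = √(ab) ≤ 1`, `r = (s - 1)²`, so `c = r + s`, and let
`K k = ∫₀¹ t * exp (k t) dt`, an increasing positive function of `k`.

* The left-hand side expands to `(a^s + b^s)/s - (2/s²)(b^s - a^s)/w`, which equals
  `g^s (w/2) (K (sw/2) - K (-sw/2))`. Hence it is nonnegative and at most `g^s (w/2) K (cw/2)`.
* On the right-hand side the second summand is nonnegative and may be discarded. In the first one,
  `b^(cq/2) - L(a^(cq/2), b^(cq/2)) = a^(cq/2) κ K κ` with `κ = cqw/2`, so all powers `1/q` combine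
  to `(w/4) a^(c/2) (2 K κ)^(1/q)`. Jensen's inequality for the probability density `2t` on `[0,1]`
  gives `(2 K (qk))^(1/q) ≥ 2 K k`, and the summand is at least `g^(-r) g^s M₁ (w/2) K (cw/2)`.

Since `g^(-r) ≥ 1` and `M₁ ≥ 1`, the two bounds fit together.
-/

open Real MeasureTheory Set intervalIntegral

noncomputable def A (x y : ℝ) : ℝ := (x + y) / 2

noncomputable def G (x y : ℝ) : ℝ := Real.sqrt (x * y)

noncomputable def L (x y : ℝ) : ℝ := (y - x) / (Real.log y - Real.log x)

noncomputable def Lp (p x y : ℝ) : ℝ := ((y ^ (p + 1) - x ^ (p + 1)) / ((p + 1) * (y - x))) ^ (1 / p)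

/-- The integral `∫₀¹ t exp (k t) dt`, i.e. half the moment generating function of the
probability density `2t` on `[0,1]`. -/
noncomputable def expMoment (k : ℝ) : ℝ := ∫ t in (0:ℝ)..1, t * Real.exp (k * t)

lemma expMoment_eq {k : ℝ} (hk : k ≠ 0) :
    expMoment k = ((k - 1) * Real.exp k + 1) / k ^ 2 := by
  have h : ∀ t ∈ Set.uIcc (0:ℝ) 1,
      HasDerivAt (fun t : ℝ => (k * t - 1) * Real.exp (k * t) / k ^ 2) (t * Real.exp (k * t)) t := by
    intro t _
    have h1 : HasDerivAt (fun t : ℝ => k * t) k t := by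
      simpa using (hasDerivAt_id t).const_mul k
    refine (((h1.sub_const 1).mul h1.exp).div_const (k ^ 2)).congr_deriv ?_
    field_simp
    ring
  rw [expMoment, integral_eq_sub_of_hasDerivAt h
    ((by fun_prop : Continuous fun t : ℝ => t * Real.exp (k * t)).intervalIntegrable _ _)]
  simp
  ring

lemma expMoment_mono {k l : ℝ} (h : k ≤ l) : expMoment k ≤ expMoment l := by
  apply integral_mono_on zero_le_one
  · exact (by fun_prop : Continuous fun t : ℝ => t * Real.exp (k * t)).intervalIntegrable _ _
  · exact (by fun_prop : Continuous fun t : ℝ => t * Real.exp (l * t)).intervalIntegrable _ _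
  · intro t ht
    have := ht.1
    gcongr

lemma expMoment_pos (k : ℝ) : 0 < expMoment k := by
  apply intervalIntegral_pos_of_pos_on
  · exact (by fun_prop : Continuous fun t : ℝ => t * Real.exp (k * t)).intervalIntegrable _ _
  · intro t ht
    exact mul_pos ht.1 (Real.exp_pos _)
  · exact zero_lt_one

/-- Jensen's inequality for `x ↦ x ^ q` and the density `2t`, obtained by integrating the tangent
line (Bernoulli) inequality at the mean `2 * expMoment k`. -/
lemma expMoment_jensen {k q : ℝ} (hq : 1 ≤ q) :
    2 * expMoment k ≤ (2 * expMoment (k * q)) ^ (1 / q) := by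
  have hK := expMoment_pos k
  have hKq := expMoment_pos (k * q)
  set J := 2 * expMoment k with hJ
  have hJ0 : 0 < J := by positivity
  have hJq : 0 < J ^ q := Real.rpow_pos_of_pos hJ0 q
  have key : ∫ t in (0:ℝ)..1, ((1 - q) * t + (q / J) * (t * Real.exp (k * t)))
      ≤ ∫ t in (0:ℝ)..1, (1 / J ^ q) * (t * Real.exp (k * q * t)) := by
    apply integral_mono_on zero_le_one
    · exact (by fun_prop : Continuous fun t : ℝ =>
        (1 - q) * t + (q / J) * (t * Real.exp (k * t))).intervalIntegrable _ _
    · exact (by fun_prop : Continuous fun t : ℝ =>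
        (1 / J ^ q) * (t * Real.exp (k * q * t))).intervalIntegrable _ _
    · intro t ht
      have hE : 0 < Real.exp (k * t) / J := by positivity
      have hB := one_add_mul_self_le_rpow_one_add
        (s := Real.exp (k * t) / J - 1) (by linarith) hq
      rw [add_sub_cancel, Real.div_rpow (Real.exp_pos _).le hJ0.le, ← Real.exp_mul] at hB
      have h2 := mul_le_mul_of_nonneg_left hB ht.1
      have e : k * q * t = k * t * q := by ring
      rw [e]
      calc _ = t * (1 + q * (Real.exp (k * t) / J - 1)) := by ring
        _ ≤ _ := h2
        _ = _ := by ring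
  rw [intervalIntegral.integral_add
    ((by fun_prop : Continuous fun t : ℝ => (1 - q) * t).intervalIntegrable _ _)
    ((by fun_prop : Continuous fun t : ℝ =>
      (q / J) * (t * Real.exp (k * t))).intervalIntegrable _ _),
    intervalIntegral.integral_const_mul, intervalIntegral.integral_const_mul,
    intervalIntegral.integral_const_mul, integral_id] at key
  change _ + q / J * expMoment k ≤ 1 / J ^ q * expMoment (k * q) at key
  have e1 : q / J * expMoment k = q / 2 := by
    rw [hJ]; field_simp
  rw [e1] at key
  have e2 : (1:ℝ) / 2 ≤ 1 / J ^ q * expMoment (k * q) := by linarith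
  have e3 : J ^ q ≤ 2 * expMoment (k * q) := by
    have h3 := mul_le_mul_of_nonneg_left e2 hJq.le
    have h4 : J ^ q * (1 / J ^ q * expMoment (k * q)) = expMoment (k * q) := by
      field_simp
    linarith
  have hq0 : q ≠ 0 := by linarith
  calc J = (J ^ q) ^ (1 / q) := by
        rw [← Real.rpow_mul hJ0.le, mul_one_div_cancel hq0, Real.rpow_one]
    _ ≤ _ := Real.rpow_le_rpow hJq.le e3 (by positivity)

/-- The left-hand side of the inequality as a trapezoid-rule error for `exp (s u)` on `[α, β]`. -/
lemma lhs_eq {α β s : ℝ} (hαβ : α < β) (hs0 : 0 < s) (hs1 : s < 1) :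
    G (Real.exp α ^ s / s + 1) (Real.exp β ^ s / s + 1) ^ 2
        - (2 / s ^ 2) * A (G (Real.exp α ^ s) (Real.exp β ^ s) ^ 2) (s ^ 2)
        - (2 / s) * Lp (s - 1) (Real.exp α) (Real.exp β) ^ (s - 1) * L (Real.exp α) (Real.exp β)
      = Real.exp ((α + β) * s / 2) * ((β - α) / 2) *
        (expMoment (s * (β - α) / 2) - expMoment (-(s * (β - α) / 2))) := by
  have hw : 0 < β - α := sub_pos.2 hαβ
  have hx : s * (β - α) / 2 ≠ 0 := by positivity
  have hexp : Real.exp α < Real.exp β := Real.exp_lt_exp.2 hαβ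
  have hexps : Real.exp (α * s) < Real.exp (β * s) :=
    Real.exp_lt_exp.2 (mul_lt_mul_of_pos_right hαβ hs0)
  have hLp : Lp (s - 1) (Real.exp α) (Real.exp β) ^ (s - 1)
      = (Real.exp (β * s) - Real.exp (α * s)) / (s * (Real.exp β - Real.exp α)) := by
    have h0 : 0 ≤ (Real.exp (β * s) - Real.exp (α * s)) / (s * (Real.exp β - Real.exp α)) :=
      div_nonneg (by linarith) (mul_nonneg hs0.le (by linarith))
    unfold _root_.Lp
    rw [sub_add_cancel, ← Real.exp_mul, ← Real.exp_mul, ← Real.rpow_mul h0,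
      one_div_mul_cancel (by linarith), Real.rpow_one]
  rw [hLp, expMoment_eq hx, expMoment_eq (neg_ne_zero.2 hx), G, G, A, L,
    Real.sq_sqrt (by positivity), Real.sq_sqrt (by positivity), Real.log_exp, Real.log_exp,
    ← Real.exp_mul, ← Real.exp_mul]
  have e1 : Real.exp (α * s) = Real.exp ((α + β) * s / 2) * Real.exp (-(s * (β - α) / 2)) := by
    rw [← Real.exp_add]; congr 1; ring
  have e2 : Real.exp (β * s) = Real.exp ((α + β) * s / 2) * Real.exp (s * (β - α) / 2) := by
    rw [← Real.exp_add]; congr 1; ring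
  rw [e1, e2]
  have hne : Real.exp β - Real.exp α ≠ 0 := by linarith
  have hwne := hw.ne'
  generalize Real.exp (-(s * (β - α) / 2)) = X
  generalize Real.exp (s * (β - α) / 2) = Y
  generalize Real.exp ((α + β) * s / 2) = Z
  generalize Real.exp β - Real.exp α = D at *
  generalize β - α = w at *
  field_simp
  ring

lemma le_L {x y : ℝ} (hx : 0 < x) (hxy : x < y) : x ≤ L x y := by
  have hl : 0 < Real.log y - Real.log x := sub_pos.2 (Real.log_lt_log hx hxy)
  have h := Real.log_le_sub_one_of_pos (div_pos (hx.trans hxy) hx)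
  rw [Real.log_div (hx.trans hxy).ne' hx.ne'] at h
  rw [L, le_div_iff₀ hl]
  have h2 := mul_le_mul_of_nonneg_left h hx.le
  have e : x * (y / x - 1) = y - x := by field_simp
  linarith

lemma sub_L_eq {α β p : ℝ} (hαβ : α < β) (hp : 0 < p) :
    Real.exp β ^ p - L (Real.exp α ^ p) (Real.exp β ^ p)
      = Real.exp α ^ p * (p * (β - α) * expMoment (p * (β - α))) := by
  have hw : 0 < β - α := sub_pos.2 hαβ
  have hwne := hw.ne'
  have hκ : p * (β - α) ≠ 0 := by positivity
  rw [expMoment_eq hκ, L, ← Real.exp_mul, ← Real.exp_mul, Real.log_exp, Real.log_exp]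
  have e : Real.exp (β * p) = Real.exp (α * p) * Real.exp (p * (β - α)) := by
    rw [← Real.exp_add]; congr 1; ring
  have e' : β * p - α * p = p * (β - α) := by ring
  rw [e, e']
  generalize β - α = w at *
  field_simp
  ring

/-- Collecting the powers `1/q`: with `w = β - α` and `p = c q` the constant
`(1/p)^(1/q) (w/4)^(1-1/q)` turns the `q`-th moment into a normalized one, to which Jensen applies. -/
lemma first_term_bound {α β c q : ℝ} (hαβ : α < β) (hc : 0 < c) (hq : 1 ≤ q) :
    Real.exp (α * c / 2) * ((β - α) / 2 * expMoment (c * (β - α) / 2)) ≤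
      (1 / (c * q)) ^ (1 / q) * ((β - α) / 4) ^ (1 - 1 / q) *
        (Real.exp β ^ (c * q / 2) -
          L (Real.exp α ^ (c * q / 2)) (Real.exp β ^ (c * q / 2))) ^ (1 / q) := by
  have hw : 0 < β - α := sub_pos.2 hαβ
  have hq0 : 0 < q := by linarith
  rw [sub_L_eq hαβ (by positivity)]
  have hJ := expMoment_jensen (k := c * (β - α) / 2) hq
  rw [show c * (β - α) / 2 * q = c * q / 2 * (β - α) by ring] at hJ
  have hKp := expMoment_pos (c * q / 2 * (β - α))
  generalize expMoment (c * q / 2 * (β - α)) = K at *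
  generalize expMoment (c * (β - α) / 2) = K₁ at *
  generalize β - α = w at *
  have hE : (Real.exp α ^ (c * q / 2)) ^ (1 / q) = Real.exp (α * c / 2) := by
    rw [← Real.exp_mul, ← Real.exp_mul]
    congr 1
    field_simp
  have hR : (1 / (c * q)) ^ (1 / q) * (w / 4) ^ (1 - 1 / q) *
        (Real.exp α ^ (c * q / 2) * (c * q / 2 * w * K)) ^ (1 / q)
      = Real.exp (α * c / 2) * (w / 4) * (2 * K) ^ (1 / q) := by
    have h1 : (1 / (c * q)) ^ (1 / q) * (c * q / 2 * w * K) ^ (1 / q)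
        = (w / 4) ^ (1 / q) * (2 * K) ^ (1 / q) := by
      rw [← Real.mul_rpow (by positivity) (by positivity),
        ← Real.mul_rpow (by positivity) (by positivity)]
      congr 1
      field_simp
      norm_num
    have h2 : (w / 4) ^ (1 - 1 / q) * (w / 4) ^ (1 / q) = w / 4 := by
      rw [← Real.rpow_add (by positivity), sub_add_cancel, Real.rpow_one]
    rw [Real.mul_rpow (by positivity) (by positivity), hE]
    calc _ = (w / 4) ^ (1 - 1 / q) * Real.exp (α * c / 2) *
          ((1 / (c * q)) ^ (1 / q) * (c * q / 2 * w * K) ^ (1 / q)) := by ring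
      _ = Real.exp (α * c / 2) * ((w / 4) ^ (1 - 1 / q) * (w / 4) ^ (1 / q)) *
          (2 * K) ^ (1 / q) := by rw [h1]; ring
      _ = _ := by rw [h2]
  rw [hR]
  calc _ = Real.exp (α * c / 2) * (w / 4) * (2 * K₁) := by ring
    _ ≤ _ := by gcongr

theorem stmt_19 (a b s q : ℝ) (ha : 0 < a) (hab : a < b) (hb1 : b ≤ 1)
    (hs0 : 0 < s) (hs1 : s < 1) (hq : 1 ≤ q)
    (c M₁ M₂ : ℝ) (hc : c = s ^ 2 - s + 1)
    (hM₁ : M₁ = Real.sqrt (a * b) ^ s / s + 1) (hM₂ : M₂ = b ^ s / s + 1) :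
    |G (a ^ s / s + 1) (b ^ s / s + 1) ^ 2 - (2 / s ^ 2) * A (G (a ^ s) (b ^ s) ^ 2) (s ^ 2)
        - (2 / s) * Lp (s - 1) a b ^ (s - 1) * L a b|
      ≤ (1 / G a b ^ ((s - 1) ^ 2)) * (1 / (c * q)) ^ (1 / q) *
          ((b - a) / (4 * L a b)) ^ (1 - 1 / q) *
          (M₁ * G (a ^ (-(s - 1) ^ 2)) (b ^ s) *
              (b ^ (c * q / 2) - L (a ^ (c * q / 2)) (b ^ (c * q / 2))) ^ (1 / q)
            + M₂ * G (b ^ (-(s - 1) ^ 2)) (a ^ s) *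
              (L (a ^ (c * q / 2)) (b ^ (c * q / 2)) - a ^ (c * q / 2)) ^ (1 / q)) := by
  obtain ⟨α, rfl⟩ : ∃ α, a = Real.exp α := ⟨Real.log a, (Real.exp_log ha).symm⟩
  obtain ⟨β, rfl⟩ : ∃ β, b = Real.exp β := ⟨Real.log b, (Real.exp_log (ha.trans hab)).symm⟩
  have hαβ : α < β := Real.exp_lt_exp.1 hab
  have hβ : β ≤ 0 := Real.exp_le_one_iff.1 hb1
  have hw : 0 < β - α := sub_pos.2 hαβ
  have hcs : c = (s - 1) ^ 2 + s := by rw [hc]; ring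
  have hr := sq_nonneg (s - 1)
  have hc0 : 0 < c := by linarith
  have hM1 : 1 ≤ M₁ := by rw [hM₁]; linarith [show 0 ≤ Real.sqrt (Real.exp α * Real.exp β) ^ s / s by positivity]
  have hM2 : 0 ≤ M₂ := by rw [hM₂]; positivity
  have hG0 : ∀ x y : ℝ, 0 ≤ G x y := fun x y => Real.sqrt_nonneg _
  rw [lhs_eq hαβ hs0 hs1]
  have hx0 : 0 ≤ s * (β - α) / 2 := by positivity
  have hKx : expMoment (-(s * (β - α) / 2)) ≤ expMoment (s * (β - α) / 2) :=
    expMoment_mono (by linarith)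
  have hKc : expMoment (s * (β - α) / 2) ≤ expMoment (c * (β - α) / 2) := by
    apply expMoment_mono
    gcongr
    linarith
  have hKn := expMoment_pos (-(s * (β - α) / 2))
  rw [abs_of_nonneg (mul_nonneg (by positivity) (by linarith))]
  have hL4 : (Real.exp β - Real.exp α) / (4 * L (Real.exp α) (Real.exp β)) = (β - α) / 4 := by
    rw [L, Real.log_exp, Real.log_exp]
    have : Real.exp β - Real.exp α ≠ 0 := by linarith
    field_simp
  rw [hL4]
  have hT := first_term_bound hαβ hc0 hq
  have hS : 0 ≤ L (Real.exp α ^ (c * q / 2)) (Real.exp β ^ (c * q / 2))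
      - Real.exp α ^ (c * q / 2) :=
    sub_nonneg.2 (le_L (by positivity) (Real.rpow_lt_rpow ha.le hab (by positivity)))
  have hGab : 1 / G (Real.exp α) (Real.exp β) ^ ((s - 1) ^ 2)
      = Real.exp (-((α + β) / 2 * (s - 1) ^ 2)) := by
    rw [G, ← Real.exp_add, ← Real.exp_half, ← Real.exp_mul, Real.exp_neg, one_div]
  have hG1 : G (Real.exp α ^ (-(s - 1) ^ 2)) (Real.exp β ^ s)
      = Real.exp ((-(α * (s - 1) ^ 2) + β * s) / 2) := by
    rw [G, ← Real.exp_mul, ← Real.exp_mul, ← Real.exp_add, ← Real.exp_half]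
    congr 1
    ring
  rw [hGab, hG1]
  have hprod : 1 * Real.exp ((α + β) * s / 2) ≤ Real.exp (-((α + β) / 2 * (s - 1) ^ 2)) *
      (Real.exp ((-(α * (s - 1) ^ 2) + β * s) / 2) * Real.exp (α * c / 2)) := by
    rw [← Real.exp_add (_ / 2), show (-(α * (s - 1) ^ 2) + β * s) / 2 + α * c / 2
      = (α + β) * s / 2 by rw [hcs]; ring]
    gcongr
    apply Real.one_le_exp
    nlinarith
  have hK0 := expMoment_pos (c * (β - α) / 2)
  set T := (1 / (c * q)) ^ (1 / q) * ((β - α) / 4) ^ (1 - 1 / q) with hTdef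
  have hT0 : 0 ≤ T := by positivity
  calc _ ≤ (1 * Real.exp ((α + β) * s / 2)) *
        ((β - α) / 2 * expMoment (c * (β - α) / 2)) := by
        rw [one_mul, mul_assoc]
        gcongr
        linarith
    _ ≤ (Real.exp (-((α + β) / 2 * (s - 1) ^ 2)) *
        (Real.exp ((-(α * (s - 1) ^ 2) + β * s) / 2) * Real.exp (α * c / 2))) *
        ((β - α) / 2 * expMoment (c * (β - α) / 2)) := by gcongr
    _ = Real.exp (-((α + β) / 2 * (s - 1) ^ 2)) * 1 *
        Real.exp ((-(α * (s - 1) ^ 2) + β * s) / 2) *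
        (Real.exp (α * c / 2) * ((β - α) / 2 * expMoment (c * (β - α) / 2))) := by ring
    _ ≤ Real.exp (-((α + β) / 2 * (s - 1) ^ 2)) * M₁ *
        Real.exp ((-(α * (s - 1) ^ 2) + β * s) / 2) *
        (T * (Real.exp β ^ (c * q / 2) -
          L (Real.exp α ^ (c * q / 2)) (Real.exp β ^ (c * q / 2))) ^ (1 / q)) := by gcongr
    _ ≤ _ := by
        have h2 : 0 ≤ Real.exp (-((α + β) / 2 * (s - 1) ^ 2)) * T *
          (M₂ * G (Real.exp β ^ (-(s - 1) ^ 2)) (Real.exp α ^ s) *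
            (L (Real.exp α ^ (c * q / 2)) (Real.exp β ^ (c * q / 2))
              - Real.exp α ^ (c * q / 2)) ^ (1 / q)) :=
          mul_nonneg (by positivity)
            (mul_nonneg (mul_nonneg hM2 (hG0 _ _)) (Real.rpow_nonneg hS _))
        rw [hTdef] at h2 ⊢
        linarith
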